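/- arXiv:1809.02947 — 2 statements merged into one kernel-verified Lean document; each statement's English description precedes it below -/
import Mathlib

section
/- Let m, n be integers with gcd(m,n) = 1 and m ≠ n, and let c ≥ 1. Then A_c(m,n) is a cyclic group of order |m−n|^c, i.e. A_c(m,n) ≅ ℤ/|m−n|^c ℤ. -/
noncomputable section

def shiftN (c : ℕ) : Matrix (Fin c) (Fin c) ℤ :=
  Matrix.of fun i j => if (i : ℕ) = (j : ℕ) + 1 then 1 else 0

def Mphi (c : ℕ) (m n : ℤ) : Matrix (Fin c) (Fin c) ℤ := (n - m) • 1 + (-m) • shiftN c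

def Mpsi (c : ℕ) : Matrix (Fin c) (Fin c) ℤ := 1 + shiftN c

lemma commute_Mpsi_Mphi (c : ℕ) (m n : ℤ) : Commute (Mpsi c) (Mphi c m n) := by
  unfold Mpsi Mphi
  simp only [mul_add, add_mul, Commute, SemiconjBy]
  simp only [mul_smul_comm, smul_mul_assoc, one_mul, mul_one]
  abel

lemma det_Mpsi (c : ℕ) : (Mpsi c).det = 1 := by
  have h : (Mpsi c).BlockTriangular (OrderDual.toDual) := by
    intro i j hij
    simp only [Mpsi, shiftN, Matrix.add_apply, Matrix.one_apply, Matrix.of_apply]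
    have : i < j := hij
    rw [if_neg (by omega), if_neg (by omega)]
    simp
  rw [Matrix.det_of_lowerTriangular _ h]
  apply Finset.prod_eq_one
  intro i _
  simp [Mpsi, shiftN, Matrix.one_apply]

def MpsiUnit (c : ℕ) : (Matrix (Fin c) (Fin c) ℤ)ˣ :=
  ((Matrix.isUnit_iff_isUnit_det _).2 (by rw [det_Mpsi]; exact isUnit_one)).unit

lemma MpsiUnit_coe (c : ℕ) : (MpsiUnit c : Matrix (Fin c) (Fin c) ℤ) = Mpsi c :=
  IsUnit.unit_spec _

/-- ψ as an additive automorphism of ℤ^c. -/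
def psiEquiv (c : ℕ) : (Fin c → ℤ) ≃+ (Fin c → ℤ) where
  toFun := (Mpsi c).mulVec
  invFun := ((MpsiUnit c)⁻¹ : (Matrix (Fin c) (Fin c) ℤ)ˣ).val.mulVec
  left_inv := fun v => by
    rw [Matrix.mulVec_mulVec]
    rw [show ((MpsiUnit c)⁻¹ : (Matrix (Fin c) (Fin c) ℤ)ˣ).val * Mpsi c = 1 by
      rw [← MpsiUnit_coe]; exact Units.inv_mul _]
    exact Matrix.one_mulVec v
  right_inv := fun v => by
    rw [Matrix.mulVec_mulVec]
    rw [show Mpsi c * ((MpsiUnit c)⁻¹ : (Matrix (Fin c) (Fin c) ℤ)ˣ).val = 1 by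
      rw [← MpsiUnit_coe]; exact Units.mul_inv _]
    exact Matrix.one_mulVec v
  map_add' := fun x y => Matrix.mulVec_add _ x y

/-- The range of φ, as an additive subgroup of ℤ^c. -/
def phiRange (c : ℕ) (m n : ℤ) : AddSubgroup (Fin c → ℤ) :=
  (LinearMap.range (Mphi c m n).mulVecLin).toAddSubgroup

/-- The abelian group A_c(m,n) = ℤ^c / Im φ. -/
abbrev Ac (c : ℕ) (m n : ℤ) : Type := (Fin c → ℤ) ⧸ phiRange c m n

lemma map_phiRange (c : ℕ) (m n : ℤ) :
    (phiRange c m n).map (psiEquiv c : (Fin c → ℤ) →+ (Fin c → ℤ)) = phiRange c m n := by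
  have hcomm := commute_Mpsi_Mphi c m n
  ext x
  constructor
  · rintro ⟨y, ⟨z, rfl⟩, rfl⟩
    refine ⟨(Mpsi c).mulVec z, ?_⟩
    show (Mphi c m n).mulVec ((Mpsi c).mulVec z) = _
    show _ = (Mpsi c).mulVec ((Mphi c m n).mulVec z)
    rw [Matrix.mulVec_mulVec, Matrix.mulVec_mulVec, hcomm.eq]
  · rintro ⟨z, rfl⟩
    have hinv : Commute (((MpsiUnit c)⁻¹ : (Matrix (Fin c) (Fin c) ℤ)ˣ) : Matrix (Fin c) (Fin c) ℤ)
        (Mphi c m n) := by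
      have : Commute ((MpsiUnit c : Matrix (Fin c) (Fin c) ℤ)) (Mphi c m n) := by
        rw [MpsiUnit_coe]; exact hcomm
      exact this.units_inv_left
    refine ⟨(Mphi c m n).mulVec (((MpsiUnit c)⁻¹ :
      (Matrix (Fin c) (Fin c) ℤ)ˣ).val.mulVec z), ⟨_, rfl⟩, ?_⟩
    show (Mpsi c).mulVec _ = (Mphi c m n).mulVec z
    rw [Matrix.mulVec_mulVec, Matrix.mulVec_mulVec, hcomm.eq, mul_assoc,
      show Mpsi c * ((MpsiUnit c)⁻¹ : (Matrix (Fin c) (Fin c) ℤ)ˣ).val = 1 by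
        rw [← MpsiUnit_coe]; exact Units.mul_inv _, mul_one]


/-- The automorphism ψ induced on A_c(m,n). -/
def psiA (c : ℕ) (m n : ℤ) : Ac c m n ≃+ Ac c m n :=
  QuotientAddGroup.congr (phiRange c m n) (phiRange c m n) (psiEquiv c) (map_phiRange c m n)

/-- The action of ⟨t⟩ ≅ ℤ on A_c(m,n), with t⁻¹ a t = ψ(a). -/
def GcAct (c : ℕ) (m n : ℤ) : Multiplicative ℤ →* MulAut (Multiplicative (Ac c m n)) :=
  zpowersHom _ (AddEquiv.toMultiplicative (psiA c m n))⁻¹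

/-- The group G_c(m,n) = A_c(m,n) ⋊ ⟨t⟩. -/
abbrev Gc (c : ℕ) (m n : ℤ) : Type :=
  SemidirectProduct (Multiplicative (Ac c m n)) (Multiplicative ℤ) (GcAct c m n)

/-- The element t of G_c(m,n). -/
def tGen (c : ℕ) (m n : ℤ) : Gc c m n := SemidirectProduct.inr (Multiplicative.ofAdd 1)

/-- The image ē_i of the i-th standard basis vector in A_c(m,n). -/
def eA (c : ℕ) (m n : ℤ) (i : Fin c) : Ac c m n :=
  QuotientAddGroup.mk (Pi.single i 1)

/-- The element ē_i viewed in G_c(m,n). -/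
def eG (c : ℕ) (m n : ℤ) (i : Fin c) : Gc c m n :=
  SemidirectProduct.inl (Multiplicative.ofAdd (eA c m n i))

end

/-!
Write `x_k` for the class of the `k`-th basis vector in the cokernel of the `c × c` matrix with `a`
on the diagonal and `b` on the subdiagonal, and `x_k = 0` for `k ≥ c`. The columns of the matrix say
`a x_k = -b x_{k+1}`, so `a ^ c` annihilates the cokernel. If `a` and `b` are coprime, `b` has an
inverse `w` modulo `a ^ c`, whence `x_{k+1} = -w a x_k`: the cokernel is generated by `x_0` and is
a quotient of `R ⧸ (a ^ c)`. Conversely `x_k ↦ (-w a) ^ k` is well defined modulo `a ^ c`, and it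
inverts `1 ↦ x_0`.
-/

/-- The lower shift matrix over `R`, sending the `k`-th standard basis vector to the next one and
the last one to `0`; it is `shiftN` over an arbitrary ring. -/
def lowerShift (R : Type*) [Zero R] [One R] (c : ℕ) : Matrix (Fin c) (Fin c) R :=
  Matrix.of fun i j => if (i : ℕ) = (j : ℕ) + 1 then 1 else 0

/-- The matrix with `a` on the diagonal and `b` on the subdiagonal, which is `Mphi c m n` for
`a = n - m` and `b = -m`. -/
def lowerBidiagonal {R : Type*} [Semiring R] (c : ℕ) (a b : R) : Matrix (Fin c) (Fin c) R :=
  a • 1 + b • lowerShift R c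

/-- The cokernel of `lowerBidiagonal c a b`; it is `Ac c m n` for `a = n - m` and `b = -m`. -/
abbrev BidiagonalCoker {R : Type*} [CommRing R] (c : ℕ) (a b : R) : Type _ :=
  (Fin c → R) ⧸ LinearMap.range (lowerBidiagonal c a b).mulVecLin

/-- The `k`-th standard basis vector of `R ^ c`, indexed by all `k : ℕ` with value `0` for `c ≤ k`,
so that the shift relation holds without a boundary case. -/
def truncBasis (R : Type*) [Zero R] [One R] (c k : ℕ) : Fin c → R :=
  fun i => if (i : ℕ) = k then 1 else 0

section TruncBasis

open Matrix

variable {R : Type*}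

lemma truncBasis_val [Zero R] [One R] {c : ℕ} (i : Fin c) :
    truncBasis R c i = Pi.single i 1 := by
  ext j
  simp only [truncBasis, Pi.single_apply, Fin.ext_iff]

lemma truncBasis_eq_zero [Zero R] [One R] {c k : ℕ} (hk : c ≤ k) : truncBasis R c k = 0 := by
  ext i
  exact if_neg (by omega)

lemma linearMap_ext_truncBasis [Semiring R] {M : Type*} [AddCommMonoid M] [Module R M] {c : ℕ}
    {f g : (Fin c → R) →ₗ[R] M} (h : ∀ k, f (truncBasis R c k) = g (truncBasis R c k)) : f = g :=
  (Pi.basisFun R (Fin c)).ext fun i => by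
    simpa only [Pi.basisFun_apply, truncBasis_val] using h i

lemma lowerShift_mulVec_truncBasis [NonAssocSemiring R] (c k : ℕ) :
    lowerShift R c *ᵥ truncBasis R c k = truncBasis R c (k + 1) := by
  obtain hk | hk := lt_or_ge k c
  · rw [truncBasis_val ⟨k, hk⟩, mulVec_single_one]
    rfl
  · rw [truncBasis_eq_zero hk, truncBasis_eq_zero (hk.trans k.le_succ), mulVec_zero]

lemma lowerBidiagonal_mulVec_truncBasis [Semiring R] (c k : ℕ) (a b : R) :
    lowerBidiagonal c a b *ᵥ truncBasis R c k =
      a • truncBasis R c k + b • truncBasis R c (k + 1) := by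
  rw [lowerBidiagonal, add_mulVec, smul_mulVec, smul_mulVec, one_mulVec,
    lowerShift_mulVec_truncBasis]

lemma linearCombination_pow_truncBasis [CommSemiring R] {S : Type*} [Semiring S] [Algebra R S]
    {c : ℕ} {y : S} (hy : y ^ c = 0) (k : ℕ) :
    Fintype.linearCombination R (fun i : Fin c => y ^ (i : ℕ)) (truncBasis R c k) = y ^ k := by
  obtain hk | hk := lt_or_ge k c
  · rw [truncBasis_val ⟨k, hk⟩, Fintype.linearCombination_apply_single, one_smul]
  · rw [truncBasis_eq_zero hk, map_zero, pow_eq_zero_of_le hk hy]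

lemma linearCombination_pow_comp_mulVecLin_lowerBidiagonal [CommSemiring R] {S : Type*}
    [Semiring S] [Algebra R S] {c : ℕ} {a b : R} {y : S} (hy : y ^ c = 0)
    (hab : a • 1 + b • y = 0) :
    Fintype.linearCombination R (fun i : Fin c => y ^ (i : ℕ)) ∘ₗ
      (lowerBidiagonal c a b).mulVecLin = 0 :=
  linearMap_ext_truncBasis fun k => by
    rw [LinearMap.comp_apply, mulVecLin_apply, lowerBidiagonal_mulVec_truncBasis,
      LinearMap.zero_apply]
    calc Fintype.linearCombination R (fun i : Fin c => y ^ (i : ℕ))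
          (a • truncBasis R c k + b • truncBasis R c (k + 1))
        = a • y ^ k + b • y ^ (k + 1) := by
          simp only [map_add, map_smul, linearCombination_pow_truncBasis hy]
      _ = (a • 1 + b • y) * y ^ k := by rw [add_mul, smul_one_mul, smul_mul_assoc, pow_succ']
      _ = 0 := by rw [hab, zero_mul]

end TruncBasis

namespace BidiagonalCoker

variable {R : Type*} [CommRing R] {c : ℕ} {a b : R}

/-- The class in the cokernel of the `k`-th standard basis vector, which is `0` for `c ≤ k`. -/
def gen (c : ℕ) (a b : R) (k : ℕ) : BidiagonalCoker c a b :=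
  Submodule.Quotient.mk (truncBasis R c k)

lemma gen_eq_zero {k : ℕ} (hk : c ≤ k) : gen c a b k = 0 := by
  rw [gen, truncBasis_eq_zero hk, Submodule.Quotient.mk_zero]

lemma hom_ext {M : Type*} [AddCommGroup M] [Module R M] {f g : BidiagonalCoker c a b →ₗ[R] M}
    (h : ∀ k, f (gen c a b k) = g (gen c a b k)) : f = g :=
  Submodule.linearMap_qext _ (linearMap_ext_truncBasis h)

lemma smul_gen (k : ℕ) : a • gen c a b k = (-b) • gen c a b (k + 1) := by
  have hcol : a • gen c a b k + b • gen c a b (k + 1) = 0 :=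
    (Submodule.Quotient.mk_eq_zero _).2
      ⟨truncBasis R c k, lowerBidiagonal_mulVec_truncBasis c k a b⟩
  rw [neg_smul, eq_neg_of_add_eq_zero_left hcol]

lemma pow_smul_gen (j k : ℕ) : a ^ j • gen c a b k = (-b) ^ j • gen c a b (k + j) := by
  induction j with
  | zero => simp only [pow_zero, add_zero]
  | succ j ih =>
    rw [pow_succ', mul_smul, ih, smul_comm, smul_gen, smul_smul, ← pow_succ, add_assoc]

lemma pow_smul_gen_eq_zero (k : ℕ) : a ^ c • gen c a b k = 0 := by
  rw [pow_smul_gen, gen_eq_zero (Nat.le_add_left c k), smul_zero]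

lemma gen_succ_of_bezout {u w : R} (h : u * a ^ c + w * b = 1) (k : ℕ) :
    gen c a b (k + 1) = (-(w * a)) • gen c a b k :=
  calc gen c a b (k + 1)
      = (u * a ^ c + w * b) • gen c a b (k + 1) := by rw [h, one_smul]
    _ = w • b • gen c a b (k + 1) := by
      rw [add_smul, mul_smul, pow_smul_gen_eq_zero, smul_zero, zero_add, mul_smul]
    _ = (-(w * a)) • gen c a b k := by
      rw [neg_smul, mul_smul, smul_gen, neg_smul, smul_neg, neg_neg]

lemma gen_eq_pow_smul_gen_zero {u w : R} (h : u * a ^ c + w * b = 1) (k : ℕ) :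
    gen c a b k = (-(w * a)) ^ k • gen c a b 0 := by
  induction k with
  | zero => rw [pow_zero, one_smul]
  | succ k ih => rw [gen_succ_of_bezout h, ih, smul_smul, ← pow_succ']

/-- The linear map `gen k ↦ y ^ k` into an algebra, for `y` nilpotent of order at most `c` and
satisfying the relation `a + b y = 0` imposed by the columns. -/
noncomputable def powHom {S : Type*} [Ring S] [Algebra R S] (y : S) (hy : y ^ c = 0)
    (hab : a • 1 + b • y = 0) : BidiagonalCoker c a b →ₗ[R] S :=
  (LinearMap.range (lowerBidiagonal c a b).mulVecLin).liftQ
    (Fintype.linearCombination R fun i : Fin c => y ^ (i : ℕ)) <|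
    LinearMap.range_le_ker_iff.2 <| linearCombination_pow_comp_mulVecLin_lowerBidiagonal hy hab

lemma powHom_gen {S : Type*} [Ring S] [Algebra R S] {y : S} (hy : y ^ c = 0)
    (hab : a • 1 + b • y = 0) (k : ℕ) : powHom y hy hab (gen c a b k) = y ^ k :=
  linearCombination_pow_truncBasis hy k

/-- The map `1 ↦ gen 0` from `R ⧸ (a ^ c)` to the cokernel. -/
noncomputable def ofQuotient (c : ℕ) (a b : R) :
    (R ⧸ Ideal.span {a ^ c}) →ₗ[R] BidiagonalCoker c a b :=
  (Ideal.span {a ^ c}).liftQ (LinearMap.toSpanSingleton R _ (gen c a b 0)) <|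
    (Ideal.span_singleton_le_iff_mem _).2 (pow_smul_gen_eq_zero 0)

lemma ofQuotient_mk (r : R) : ofQuotient c a b (Ideal.Quotient.mk _ r) = r • gen c a b 0 :=
  rfl

lemma mk_neg_mul_pow_eq_zero (w : R) :
    Ideal.Quotient.mk (Ideal.span {a ^ c}) (-(w * a)) ^ c = 0 := by
  rw [← map_pow, Ideal.Quotient.eq_zero_iff_dvd, ← neg_mul, mul_pow]
  exact dvd_mul_left _ _

lemma smul_one_add_smul_mk_neg_mul {u w : R} (h : u * a ^ c + w * b = 1) :
    a • 1 + b • Ideal.Quotient.mk (Ideal.span {a ^ c}) (-(w * a)) = 0 := by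
  change Ideal.Quotient.mk (Ideal.span {a ^ c}) (a * 1 + b * -(w * a)) = 0
  rw [Ideal.Quotient.eq_zero_iff_dvd]
  exact ⟨u * a, by linear_combination (-a) * h⟩

/-- The cokernel is `R ⧸ (a ^ c)` when `w` is an inverse of `b` modulo `a ^ c`; the isomorphism
sends `gen k` to `(-w a) ^ k`. -/
noncomputable def equivQuotient {u w : R} (h : u * a ^ c + w * b = 1) :
    BidiagonalCoker c a b ≃ₗ[R] R ⧸ Ideal.span {a ^ c} :=
  let f := powHom _ (mk_neg_mul_pow_eq_zero w) (smul_one_add_smul_mk_neg_mul h)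
  have right_inv : f ∘ₗ ofQuotient c a b = LinearMap.id :=
    Submodule.linearMap_qext _ <| LinearMap.ext_ring <| by
      change f ((1 : R) • gen c a b 0) = 1
      rw [one_smul, powHom_gen, pow_zero]
  have left_inv : ofQuotient c a b ∘ₗ f = LinearMap.id := hom_ext fun k => by
    rw [LinearMap.comp_apply, powHom_gen, ← map_pow, ofQuotient_mk, LinearMap.id_apply,
      ← gen_eq_pow_smul_gen_zero h]
  LinearEquiv.ofLinearMap f (ofQuotient c a b) right_inv left_inv

end BidiagonalCoker

/-- `Ac c m n` as a cokernel over `ℤ`. It is the identity map: `Ac` divides by the same subgroup,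
with its module structure forgotten. -/
def acAddEquiv (c : ℕ) (m n : ℤ) : Ac c m n ≃+ BidiagonalCoker c (n - m) (-m) :=
  AddEquiv.refl (Ac c m n)

lemma isCoprime_sub_neg {R : Type*} [CommRing R] {m n : R} (h : IsCoprime m n) :
    IsCoprime (n - m) (-m) := by
  obtain ⟨u, v, huv⟩ := h
  exact ⟨v, -(u + v), by linear_combination huv⟩

theorem stmt9_general {R : Type*} [CommRing R] {a b : R} (h : IsCoprime a b) (c : ℕ) :
    Nonempty (BidiagonalCoker c a b ≃ₗ[R] R ⧸ Ideal.span {a ^ c}) :=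
  let ⟨_, _, huw⟩ := h.pow_left (m := c)
  ⟨BidiagonalCoker.equivQuotient huw⟩

/-- For `gcd(m,n) = 1`, `m ≠ n` and `c ≥ 1`, `A_c(m,n)` is cyclic of order `|m-n|^c`. -/
theorem stmt9 (m n : ℤ) (h : Int.gcd m n = 1) (hmn : m ≠ n) (c : ℕ) (hc : 1 ≤ c) :
    Nonempty (Ac c m n ≃+ ZMod ((m - n).natAbs ^ c)) := by
  obtain ⟨e⟩ := stmt9_general (isCoprime_sub_neg (Int.isCoprime_iff_gcd_eq_one.2 h)) c
  rw [← Int.natAbs_neg, neg_sub, ← Int.natAbs_pow]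
  exact ⟨(acAddEquiv c m n).trans <|
    e.toAddEquiv.trans (Int.quotientSpanEquivZMod _).toAddEquiv⟩
end

section
/- Let m, n be integers with gcd(m,n) = 1 and m ≠ n, and let c ≥ 1. Then G_c(m,n) has the R_∞–property if and only if n + m is not congruent to 0 modulo |n−m|^{c−1}. Equivalently: G_c(m,n) fails to have the R_∞–property if and only if |n−m|^{c−1} divides n + m. -/
/-- The twisted conjugacy (Reidemeister) equivalence relation of an endomorphism `φ`:
`x ∼ y ↔ ∃ z, x = z * y * (φ z)⁻¹`. -/
def twistedConj {G : Type*} [Group G] (φ : G →* G) : Setoid G where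
  r x y := ∃ z : G, x = z * y * (φ z)⁻¹
  iseqv := by
    constructor
    · exact fun x => ⟨1, by simp⟩
    · rintro x y ⟨z, rfl⟩
      exact ⟨z⁻¹, by simp [mul_assoc]⟩
    · rintro x y z ⟨u, rfl⟩ ⟨v, rfl⟩
      exact ⟨u * v, by simp [mul_assoc]⟩

/-- A group `G` has the `R∞`–property if every automorphism has infinitely many
twisted conjugacy classes. -/
def HasRInfty (G : Type*) [Group G] : Prop :=
  ∀ φ : G ≃* G, Infinite (Quotient (twistedConj φ.toMonoidHom))

section TwistedConj

variable {G Q : Type*} [Group G] [Group Q] {π : G →* Q} {f : G →* G} {φ : Q →* Q}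

theorem infinite_quotient_twistedConj_of_surjective (hπ : Function.Surjective π)
    (hf : ∀ g, π (f g) = φ (π g)) [Infinite (Quotient (twistedConj φ))] :
    Infinite (Quotient (twistedConj f)) := by
  refine Infinite.of_surjective (Quotient.map π ?_ : _ → Quotient (twistedConj φ))
    (Quotient.map_surjective _ hπ)
  rintro _ y ⟨z, rfl⟩
  exact ⟨π z, by simp only [map_mul, map_inv, hf]⟩

theorem finite_quotient_twistedConj_of_finite_ker (hπ : Function.Surjective π) [Finite π.ker]
    (hf : ∀ g, π (f g) = φ (π g)) [Finite (Quotient (twistedConj φ))] :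
    Finite (Quotient (twistedConj f)) := by
  have hrep : ∀ q : Quotient (twistedConj φ), ∃ g, Quotient.mk _ (π g) = q :=
    Quotient.mk_surjective.comp hπ
  choose rep hrep using hrep
  let p : π.ker × Quotient (twistedConj φ) → Quotient (twistedConj f) :=
    fun x => Quotient.mk _ (x.1 * rep x.2)
  refine Finite.of_surjective p (Quotient.ind fun g => ?_)
  obtain ⟨w, hw⟩ := Quotient.exact (hrep (Quotient.mk _ (π g)))
  obtain ⟨z, rfl⟩ := hπ w
  set r := rep (Quotient.mk _ (π g))
  have hker : z * g * (f z)⁻¹ * r⁻¹ ∈ π.ker := by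
    rw [MonoidHom.mem_ker, map_mul, map_mul, map_mul, map_inv, map_inv, hf, ← hw, mul_inv_cancel]
  exact ⟨(⟨_, hker⟩, Quotient.mk _ (π g)), Quotient.sound ⟨z, inv_mul_cancel_right _ r⟩⟩

end TwistedConj

section CommGroup

variable (Q : Type*) [CommGroup Q]

theorem infinite_quotient_twistedConj_id [Infinite Q] :
    Infinite (Quotient (twistedConj (MonoidHom.id Q))) := by
  refine Infinite.of_injective (Quotient.mk _) fun x y hxy => ?_
  obtain ⟨z, hz⟩ := Quotient.exact hxy
  rw [hz, MonoidHom.id_apply, mul_right_comm, mul_inv_cancel, one_mul]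

theorem finite_quotient_twistedConj_inv [Group.FG Q] :
    Finite (Quotient (twistedConj (invMonoidHom : Q →* Q))) := by
  have : (powMonoidHom 2 : Q →* Q).range.FiniteIndex :=
    Subgroup.finiteIndex_range_powMonoidHom_of_fg Q two_ne_zero
  let p : Q ⧸ (powMonoidHom 2 : Q →* Q).range → Quotient (twistedConj (invMonoidHom : Q →* Q)) :=
    Quotient.map' id fun x y hxy => by
      obtain ⟨z, hz⟩ := QuotientGroup.leftRel_apply.1 hxy
      rw [powMonoidHom_apply] at hz
      refine Setoid.symm' _ ⟨z, ?_⟩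
      rw [id, id, invMonoidHom_apply, inv_inv, mul_right_comm, ← sq, hz, inv_mul_cancel_comm]
  exact Finite.of_surjective p (Quotient.ind fun x => ⟨QuotientGroup.mk x, rfl⟩)

end CommGroup

theorem map_eq_or_map_eq_inv_of_isMulTorsion_ker {G : Type*} [Group G] {π : G →* Multiplicative ℤ}
    (hπ : Function.Surjective π) (hker : IsMulTorsion π.ker) {f : G →* G}
    (hf : Function.Surjective f) : (∀ g, π (f g) = π g) ∨ ∀ g, π (f g) = (π g)⁻¹ := by
  have hle : π.ker ≤ (π.comp f).ker := fun g hg => by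
    have hg_fin : IsOfFinOrder g := Submonoid.isOfFinOrder_coe.2 (hker ⟨g, hg⟩)
    exact (isOfFinOrder_iff_eq_one _).1 ((π.comp f).isOfFinOrder hg_fin)
  let φ := π.liftOfSurjective hπ ⟨π.comp f, hle⟩
  let d : ℤ := (φ (Multiplicative.ofAdd 1)).toAdd
  have hpow (g : G) : π (f g) = π g ^ d := by
    have hφ : φ (π g) = π (f g) := π.liftOfRightInverse_comp_apply _ _ _ g
    rw [← hφ, φ.apply_mint]
    apply Multiplicative.toAdd.injective
    rw [toAdd_zpow, toAdd_zpow, smul_eq_mul, smul_eq_mul, mul_comm]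
  have hunit : IsUnit d := by
    obtain ⟨s, hs⟩ := (hπ.comp hf) (Multiplicative.ofAdd 1)
    have hd := congrArg Multiplicative.toAdd ((hpow s).symm.trans hs)
    rw [toAdd_zpow, smul_eq_mul, toAdd_ofAdd] at hd
    exact IsUnit.of_mul_eq_one _ hd
  rcases Int.isUnit_iff.1 hunit with hd | hd
  · exact Or.inl fun g => by rw [hpow, hd, zpow_one]
  · exact Or.inr fun g => by rw [hpow, hd, zpow_neg_one]

section SemidirectProduct

open SemidirectProduct

variable {N : Type*} [CommGroup N]

theorem exists_conj_eq_of_right_map {G : Type*} [Group G] {θ : G →* MulAut N}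
    {f : N ⋊[θ] G ≃* N ⋊[θ] G} {σ : MulAut G} (hf : ∀ g, (f g).right = σ g.right) :
    ∃ α : MulAut N, ∀ k, α * θ k * α⁻¹ = θ (σ k) := by
  have hf_symm (g : N ⋊[θ] G) : (f.symm g).right = σ.symm g.right := by
    rw [MulEquiv.eq_symm_apply, ← hf, f.apply_symm_apply]
  have hf_inl (a : N) : f (inl a) = inl (f (inl a)).left :=
    SemidirectProduct.ext rfl (by simp [hf])
  have hf_symm_inl (a : N) : f.symm (inl a) = inl (f.symm (inl a)).left :=
    SemidirectProduct.ext rfl (by simp [hf_symm])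
  let α : MulAut N :=
    { toFun := fun a => (f (inl a)).left
      invFun := fun a => (f.symm (inl a)).left
      left_inv := fun a => by simp only [← hf_inl, f.symm_apply_apply, left_inl]
      right_inv := fun a => by simp only [← hf_symm_inl, f.apply_symm_apply, left_inl]
      map_mul' := fun a b => inl_injective (φ := θ) <| by
        rw [← hf_inl, map_mul, map_mul, map_mul, ← hf_inl, ← hf_inl] }
  have hα (a : N) : f (inl a) = inl (α a) := hf_inl a
  refine ⟨α, fun k => mul_inv_eq_iff_eq_mul.2 (MulEquiv.ext fun a => inl_injective (φ := θ) ?_)⟩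
  obtain ⟨b, hb⟩ : ∃ b, f (inr k) = inl b * inr (σ k) :=
    ⟨_, by rw [← right_inr (φ := θ) k, ← hf, right_inr, inl_left_mul_inr_right]⟩
  calc inl (α (θ k a)) = f (inr k) * inl (α a) * (f (inr k))⁻¹ := by
        rw [← hα, inl_aut, map_mul, map_mul, hα, ← map_inv f, ← map_inv inr]
    _ = inl b * inl (θ (σ k) (α a)) * (inl b)⁻¹ := by
        rw [hb, inl_aut, map_inv inr]
        group
    _ = inl (θ (σ k) (α a)) := by rw [← map_mul, ← map_inv, ← map_mul, mul_inv_cancel_comm]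

theorem exists_right_map_eq_inv_iff_isConj_inv (θ : Multiplicative ℤ →* MulAut N) :
    (∃ f : N ⋊[θ] Multiplicative ℤ ≃* N ⋊[θ] Multiplicative ℤ, ∀ g, (f g).right = g.right⁻¹) ↔
      IsConj (θ (Multiplicative.ofAdd 1)) (θ (Multiplicative.ofAdd 1))⁻¹ := by
  rw [isConj_iff]
  constructor
  · rintro ⟨f, hf⟩
    obtain ⟨α, hα⟩ := exists_conj_eq_of_right_map (σ := MulEquiv.inv (Multiplicative ℤ)) hf
    rw [← map_inv]
    exact ⟨α, hα _⟩
  · rintro ⟨α, hα⟩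
    have hconj : (MulAut.conj α).toMonoidHom.comp θ = θ.comp invMonoidHom :=
      MonoidHom.ext_mint (hα.trans (map_inv θ _).symm)
    refine ⟨SemidirectProduct.congr α (MulEquiv.inv _) fun k => ?_, fun _ => rfl⟩
    have hconj_k : α * θ k * α⁻¹ = θ k⁻¹ := DFunLike.congr_fun hconj k
    exact mul_inv_eq_iff_eq_mul.1 hconj_k

theorem hasRInfty_semidirectProduct_iff [Finite N] (θ : Multiplicative ℤ →* MulAut N) :
    HasRInfty (N ⋊[θ] Multiplicative ℤ) ↔
      ¬ IsConj (θ (Multiplicative.ofAdd 1)) (θ (Multiplicative.ofAdd 1))⁻¹ := by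
  rw [← exists_right_map_eq_inv_iff_isConj_inv]
  have hsurj : Function.Surjective (rightHom : N ⋊[θ] Multiplicative ℤ →* _) := rightHom_surjective
  have : Finite (rightHom : N ⋊[θ] Multiplicative ℤ →* _).ker := by
    rw [← range_inl_eq_ker_rightHom]
    exact Set.finite_range _
  constructor
  · rintro hR ⟨f, hf⟩
    have := finite_quotient_twistedConj_inv (Multiplicative ℤ)
    have := finite_quotient_twistedConj_of_finite_ker (f := f.toMonoidHom)
      (φ := (invMonoidHom : Multiplicative ℤ →* _)) hsurj hf
    exact not_finite_iff_infinite.2 (hR f) this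
  · intro hinv f
    have := infinite_quotient_twistedConj_id (Multiplicative ℤ)
    rcases map_eq_or_map_eq_inv_of_isMulTorsion_ker (f := f.toMonoidHom) hsurj
      isMulTorsion_of_finite f.surjective with hf | hf
    · exact infinite_quotient_twistedConj_of_surjective (φ := MonoidHom.id _) hsurj hf
    · exact absurd ⟨f, hf⟩ hinv

end SemidirectProduct

theorem zpow_left_injective_of_isCoprime_exponent {G : Type*} [Group G] {k : ℤ}
    (hk : IsCoprime k (Monoid.exponent G)) : Function.Injective fun g : G => g ^ k := by
  obtain ⟨a, b, hab⟩ := hk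
  have hleft (g : G) : (g ^ k) ^ a = g := by
    conv_rhs => rw [← zpow_one g, ← hab, zpow_add, mul_comm a, mul_comm b, zpow_mul, zpow_mul,
      zpow_natCast, Monoid.pow_exponent_eq_one, one_zpow, mul_one]
  exact Function.LeftInverse.injective hleft

theorem isConj_inv_iff_exponent_dvd {N : Type*} [CommGroup N] {ψ : MulAut N} {m n : ℤ}
    (hψ : ∀ a, ψ a ^ m = a ^ n) (hm : IsCoprime m (Monoid.exponent N)) :
    IsConj ψ ψ⁻¹ ↔ (Monoid.exponent N : ℤ) ∣ n ^ 2 - m ^ 2 := by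
  rw [Group.exponent_dvd_sub_iff_zpow_eq_zpow]
  constructor
  · intro hconj
    obtain ⟨α, hα⟩ := isConj_iff.1 hconj
    have htwist (a : N) : ψ (α (ψ a)) = α a := by
      have hα_a : α (ψ a) = ψ⁻¹ (α a) := DFunLike.congr_fun (mul_inv_eq_iff_eq_mul.1 hα) a
      exact (congrArg ψ hα_a).trans (MulAut.apply_inv_self N ψ _)
    intro a
    apply α.injective
    calc α (a ^ n ^ 2) = α (ψ a ^ m) ^ n := by rw [hψ, sq, zpow_mul, map_zpow]
      _ = (α (ψ a) ^ n) ^ m := by rw [map_zpow, zpow_comm]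
      _ = ψ (α (ψ a)) ^ m ^ 2 := by rw [← hψ, sq, zpow_mul]
      _ = α (a ^ m ^ 2) := by rw [htwist, map_zpow]
  · intro hpow
    have hψψ : ψ * ψ = 1 := MulEquiv.ext fun a => by
      apply zpow_left_injective_of_isCoprime_exponent (hm.pow_left (m := 2))
      calc ψ (ψ a) ^ m ^ 2 = (ψ (ψ a) ^ m) ^ m := by rw [sq, zpow_mul]
        _ = a ^ n ^ 2 := by rw [hψ, zpow_comm, hψ, sq, zpow_mul]
        _ = a ^ m ^ 2 := hpow a
    rw [← eq_inv_iff_mul_eq_one.2 hψψ]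

theorem shiftN_mulVec_zero {c : ℕ} (v : Fin (c + 1) → ℤ) : (shiftN (c + 1)).mulVec v 0 = 0 := by
  simp [shiftN, Matrix.mulVec, dotProduct]

theorem shiftN_mulVec_succ {c : ℕ} (v : Fin (c + 1) → ℤ) (i : Fin c) :
    (shiftN (c + 1)).mulVec v i.succ = v i.castSucc := by
  have hcol (j : Fin (c + 1)) : (i : ℕ) = j ↔ i.castSucc = j :=
    (Fin.ext_iff (a := i.castSucc)).symm
  simp [shiftN, Matrix.mulVec, dotProduct, hcol]

theorem Mphi_mulVec (c : ℕ) (m n : ℤ) (v : Fin c → ℤ) :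
    (Mphi c m n).mulVec v = (n - m) • v - m • (shiftN c).mulVec v := by
  rw [Mphi, Matrix.add_mulVec, Matrix.smul_mulVec, Matrix.smul_mulVec, Matrix.one_mulVec, neg_smul,
    ← sub_eq_add_neg]

theorem Mphi_eq_smul_one_sub_smul_Mpsi (c : ℕ) (m n : ℤ) :
    Mphi c m n = n • 1 - m • Mpsi c := by
  rw [Mphi, Mpsi]
  module

theorem det_Mphi (c : ℕ) (m n : ℤ) : (Mphi c m n).det = (n - m) ^ c := by
  have hlower : (Mphi c m n).IsLowerTriangular := fun i j (hij : i < j) => by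
    have hne : (i : ℕ) ≠ j + 1 := by omega
    simp only [Mphi, shiftN, Matrix.add_apply, Matrix.smul_apply, Matrix.one_apply_ne hij.ne,
      Matrix.of_apply, if_neg hne, smul_zero, add_zero]
  rw [Matrix.det_of_isLowerTriangular _ hlower]
  have hdiag (i : Fin c) : Mphi c m n i i = n - m := by
    simp only [Mphi, shiftN, Matrix.add_apply, Matrix.smul_apply, Matrix.one_apply_eq,
      Matrix.of_apply, if_neg (Nat.ne_add_one _), mul_zero, add_zero, smul_eq_mul, mul_one]
  rw [Finset.prod_congr rfl fun i _ => hdiag i, Finset.prod_const, Finset.card_fin]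

theorem smul_psiA (c : ℕ) (m n : ℤ) (a : Ac c m n) : m • psiA c m n a = n • a := by
  induction a using QuotientAddGroup.induction_on with
  | H v =>
    refine (QuotientAddGroup.eq (s := phiRange c m n)).2 ⟨v, ?_⟩
    rw [Matrix.mulVecLin_apply, Mphi_eq_smul_one_sub_smul_Mpsi, Matrix.sub_mulVec,
      Matrix.smul_mulVec, Matrix.smul_mulVec, Matrix.one_mulVec, sub_eq_neg_add]
    rfl

theorem sub_pow_smul_Ac (c : ℕ) (m n : ℤ) (a : Ac c m n) : (n - m) ^ c • a = 0 := by
  induction a using QuotientAddGroup.induction_on with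
  | H v =>
    rw [← QuotientAddGroup.mk_zsmul, QuotientAddGroup.eq_zero_iff, ← det_Mphi]
    exact ⟨(Mphi c m n).cramer v, (Mphi c m n).mulVec_cramer v⟩

theorem finite_Ac (c : ℕ) {m n : ℤ} (hmn : m ≠ n) : Finite (Ac c m n) := by
  refine AddCommGroup.finite_of_fg_isAddTorsion _ fun a => isOfFinAddOrder_iff_zsmul_eq_zero.2 ?_
  exact ⟨(n - m) ^ c, pow_ne_zero _ (sub_ne_zero.2 hmn.symm), sub_pow_smul_Ac c m n a⟩

theorem sub_pow_dvd_of_smul_eA_zero_eq_zero {c : ℕ} {m n k : ℤ} (h : IsCoprime (n - m) m)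
    (hk : k • eA (c + 1) m n 0 = 0) : (n - m) ^ (c + 1) ∣ k := by
  rw [eA, ← QuotientAddGroup.mk_zsmul, QuotientAddGroup.eq_zero_iff] at hk
  obtain ⟨w, hw⟩ := hk
  have hrow (i : Fin (c + 1)) : (n - m) * w i - m * (shiftN (c + 1)).mulVec w i =
      (k • Pi.single 0 1 : Fin (c + 1) → ℤ) i := by
    rw [← hw, Matrix.mulVecLin_apply, Mphi_mulVec]
    rfl
  -- Forward substitution in the bidiagonal system `φ w = k e₀`.
  have hsolve (i : Fin (c + 1)) : (n - m) ^ (i + 1 : ℕ) * w i = m ^ (i : ℕ) * k := by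
    induction i using Fin.induction with
    | zero => simpa [shiftN_mulVec_zero] using hrow 0
    | succ i ih =>
      have hi := hrow i.succ
      rw [shiftN_mulVec_succ] at hi
      simp only [Pi.smul_apply, Pi.single_eq_of_ne (Fin.succ_ne_zero i), smul_zero] at hi
      simp only [Fin.val_castSucc, Fin.val_succ] at ih ⊢
      linear_combination (n - m) ^ (i + 1 : ℕ) * hi + m * ih
  exact h.pow.dvd_of_dvd_mul_left ⟨w (Fin.last c), (hsolve (Fin.last c)).symm⟩

theorem exponent_Ac (c : ℕ) {m n : ℤ} (h : IsCoprime (n - m) m) :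
    AddMonoid.exponent (Ac c m n) = (n - m).natAbs ^ c := by
  rw [← Int.natAbs_pow]
  refine Nat.dvd_antisymm ?_ ?_
  · refine AddMonoid.exponent_dvd_of_forall_nsmul_eq_zero fun a => ?_
    rw [natAbs_nsmul_eq_zero]
    exact sub_pow_smul_Ac c m n a
  · cases c with
    | zero => simp
    | succ c =>
      refine Int.natCast_dvd_natCast.1 (Int.natAbs_dvd.2 ?_)
      refine sub_pow_dvd_of_smul_eA_zero_eq_zero h ?_
      rw [natCast_zsmul, AddMonoid.exponent_nsmul_eq_zero]

theorem natAbs_sub_pow_dvd_sq_sub_sq_iff {m n : ℤ} (hmn : m ≠ n) {c : ℕ} (hc : 1 ≤ c) :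
    ((n - m).natAbs : ℤ) ^ c ∣ n ^ 2 - m ^ 2 ↔ ((n - m).natAbs : ℤ) ^ (c - 1) ∣ n + m := by
  obtain ⟨c, rfl⟩ := Nat.exists_eq_add_of_le' hc
  rw [Nat.add_sub_cancel, Int.natCast_natAbs, ← abs_pow, ← abs_pow, abs_dvd, abs_dvd, pow_succ,
    sq_sub_sq]
  exact mul_dvd_mul_iff_right (sub_ne_zero.2 hmn.symm)

/-- For `gcd(m,n) = 1`, `m ≠ n` and `c ≥ 1`: `G_c(m,n)` has the `R∞`–property iff
`|n-m|^{c-1}` does not divide `n + m`. -/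
theorem stmt12 (m n : ℤ) (h : Int.gcd m n = 1) (hmn : m ≠ n) (c : ℕ) (hc : 1 ≤ c) :
    HasRInfty (Gc c m n) ↔ ¬ ((((n - m).natAbs : ℤ) ^ (c - 1)) ∣ (n + m)) := by
  have hcop : IsCoprime (n - m) m := by
    have hnm : IsCoprime n m := (Int.isCoprime_iff_gcd_eq_one.2 h).symm
    simpa only [one_mul] using (IsCoprime.sub_mul_right_left_iff (z := 1)).2 hnm
  have := finite_Ac c hmn
  let ψ : MulAut (Multiplicative (Ac c m n)) := (psiA c m n).toMultiplicative
  have hθ : GcAct c m n (Multiplicative.ofAdd 1) = ψ⁻¹ := zpow_one _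
  have hψ (a : Multiplicative (Ac c m n)) : ψ a ^ m = a ^ n := smul_psiA c m n a
  have hexp : (Monoid.exponent (Multiplicative (Ac c m n)) : ℤ) = (n - m).natAbs ^ c := by
    rw [Monoid.exponent_multiplicative, exponent_Ac c hcop, Nat.cast_pow]
  have hm : IsCoprime m (Monoid.exponent (Multiplicative (Ac c m n))) := by
    rw [hexp, Int.natCast_natAbs]
    exact hcop.symm.abs_right.pow_right
  rw [hasRInfty_semidirectProduct_iff, hθ, inv_inv, isConj_comm,
    isConj_inv_iff_exponent_dvd hψ hm, hexp, natAbs_sub_pow_dvd_sq_sub_sq_iff hmn hc]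
end
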